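/- Let G be a simple graph on vertex set V = {0,...,n-1} with edge weights wt : E(G) → ℝ≥0, let k ≥ 1, let e_1, ..., e_m be an enumeration (insertion order) of the edges of G, and let H be a universal family of functions from V to {0,...,4k²-1}. For each i ∈ {1,...,m}, if the graph G_i consisting of the edges e_1, ..., e_i contains a k-matching, then for at least half of the functions f ∈ H (i.e., for a set of functions of cardinality at least |H|/2), the graph G_i^s contains a k-matching whose weight equals the maximum weight of a k-matching of G_i. -/

import Mathlib

open Finset
open Classical

/-- An edge is a pair `(u, v)` of vertices with `u < v`.  A set `M` of edges
is a matching if no two distinct edges of `M` share an endpoint. -/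
def IsMatchingE (M : Finset (ℕ × ℕ)) : Prop :=
  ∀ e ∈ M, ∀ e' ∈ M, e ≠ e' →
    e.1 ≠ e'.1 ∧ e.1 ≠ e'.2 ∧ e.2 ≠ e'.1 ∧ e.2 ≠ e'.2

/-- `M` is a `k`-matching of the graph with edge set `H`. -/
def IsKMatchingE (H M : Finset (ℕ × ℕ)) (k : ℕ) : Prop :=
  M ⊆ H ∧ M.card = k ∧ IsMatchingE M

/-- The weight of a set of edges. -/
noncomputable def mweight (wt : ℕ × ℕ → ℝ) (M : Finset (ℕ × ℕ)) : ℝ :=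
  ∑ e ∈ M, wt e

/-- The set of vertices covered by a set of edges. -/
def coveredE (M : Finset (ℕ × ℕ)) : Set ℕ := {v | ∃ e ∈ M, v = e.1 ∨ v = e.2}

/-- A matching is nice w.r.t. `f` if no two covered vertices lie in the same
part (preimage of a value of `f`). -/
def NiceE (f : ℕ → ℕ) (M : Finset (ℕ × ℕ)) : Prop := Set.InjOn f (coveredE M)

/-- The strict order `≺` on edges: `e ≺ e'` iff `β e = (wt e, e.1, e.2)` is
lexicographically smaller than `β e'`. -/
def edgeLT (wt : ℕ × ℕ → ℝ) (e e' : ℕ × ℕ) : Prop :=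
  wt e < wt e' ∨ (wt e = wt e' ∧ (e.1 < e'.1 ∨ (e.1 = e'.1 ∧ e.2 < e'.2)))

/-- `CompactG wt f H` : the subgraph of `H` consisting of every edge whose
endpoints lie in distinct parts of `f` and whose `β`-value is maximum among
the edges of `H` between those two parts. -/
noncomputable def CompactG (wt : ℕ × ℕ → ℝ) (f : ℕ → ℕ)
    (H : Finset (ℕ × ℕ)) : Finset (ℕ × ℕ) :=
  H.filter (fun e => f e.1 ≠ f e.2 ∧
    ∀ e' ∈ H, ({f e'.1, f e'.2} : Finset ℕ) = {f e.1, f e.2} → ¬ edgeLT wt e e')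

/-- `RedComG wt f k H` : from `CompactG wt f H` keep each edge that is among
the `8k` `β`-heaviest edges incident to (vertices of) the part of each of its
endpoints, and then keep only the `q = k(16k-1)` `β`-heaviest of those. -/
noncomputable def RedComG (wt : ℕ × ℕ → ℝ) (f : ℕ → ℕ) (k : ℕ)
    (H : Finset (ℕ × ℕ)) : Finset (ℕ × ℕ) :=
  let C := CompactG wt f H
  let R1 := C.filter (fun e =>
    (C.filter (fun e' => (f e'.1 = f e.1 ∨ f e'.2 = f e.1) ∧
      edgeLT wt e e')).card < 8 * k ∧
    (C.filter (fun e' => (f e'.1 = f e.2 ∨ f e'.2 = f e.2) ∧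
      edgeLT wt e e')).card < 8 * k)
  R1.filter (fun e => (R1.filter (fun e' => edgeLT wt e e')).card < k * (16 * k - 1))

/-- `Gji ε j i` : the graph whose edge set is `{ε j, …, ε i}`
(empty if `j > i`). -/
def Gji (ε : ℕ → ℕ × ℕ) (j i : ℕ) : Finset (ℕ × ℕ) :=
  (Finset.Icc j i).image ε

/-- With `q = k(16k-1)`, `GfA wt f k ε j` is the graph `G_{j·q}^f`:
`G_0^f = ∅` and, for a positive multiple `i = (j+1)q` of `q`,
`G_i^f = RedComG (G_î^f ∪ G_{i*+1, î})` where `î = jq` is the largest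
multiple of `q` strictly below `i` and `i*` is the largest multiple of `q`
strictly below `î` (`i* = 0` if `î = 0`). -/
noncomputable def GfA (wt : ℕ × ℕ → ℝ) (f : ℕ → ℕ) (k : ℕ)
    (ε : ℕ → ℕ × ℕ) : ℕ → Finset (ℕ × ℕ)
  | 0 => ∅
  | j + 1 => RedComG wt f k
      (GfA wt f k ε j ∪
        Gji ε ((j - 1) * (k * (16 * k - 1)) + 1) (j * (k * (16 * k - 1))))

/-- `streamGs wt f k ε i` is the graph `G_i^s = G_î^f ∪ G_{i*+1, i}`, where
`î = q·⌊(i-1)/q⌋` is the largest multiple of `q = k(16k-1)` strictly below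
`i`, and `i*` is the largest multiple of `q` strictly below `î`
(`i* = 0` if `î = 0`). -/
noncomputable def streamGs (wt : ℕ × ℕ → ℝ) (f : ℕ → ℕ) (k : ℕ)
    (ε : ℕ → ℕ × ℕ) (i : ℕ) : Finset (ℕ × ℕ) :=
  let q := k * (16 * k - 1)
  let jj := (i - 1) / q
  GfA wt f k ε jj ∪ Gji ε ((jj - 1) * q + 1) i

/-!
Let `M` be a maximum-weight `k`-matching of `G_i`. It covers at most `2k` vertices, so a union
bound over pairs of them shows that at least half of the functions of a universal family are
injective on these vertices. For such an `f` the edges of `M` join pairwise disjoint pairs of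
distinct parts, and replacing a graph by its `Red-Com` never destroys this: if an edge `e` of the
matching is lost, the other `k - 1` edges block at most `2k - 2` parts, and the `β`-heaviest edge
`b` between two unblocked parts can take the place of `e`. This `b` survives the reduction because
every `β`-heavier edge of `Compact` touches a blocked part. Hence at most `2k - 2 < 8k` heavier
edges are incident to either part of `b`, and at most `(2k - 2) · 8k < k(16k - 1)` heavier edges
pass the first selection.
-/

theorem card_offDiag_le_of_card_le {α : Type*} {W : Finset α} {c : ℕ} (hW : #W ≤ c) :
    #W.offDiag ≤ c * (c - 1) := by
  rw [offDiag_card, ← Nat.mul_sub_one]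
  exact Nat.mul_le_mul hW (Nat.sub_le_sub_right hW 1)

theorem card_le_of_forall_card_filter_lt {α β : Type*} [LinearOrder β] {g : α → β}
    {s : Finset α} {d : ℕ} (hg : Set.InjOn g s) (h : ∀ a ∈ s, #{b ∈ s | g a < g b} < d) :
    #s ≤ d := by
  rcases s.eq_empty_or_nonempty with rfl | hs
  · exact Nat.zero_le d
  obtain ⟨a, ha, hmin⟩ := exists_min_image s g hs
  have herase : s.erase a ⊆ {b ∈ s | g a < g b} := fun b hb => by
    obtain ⟨hne, hbs⟩ := mem_erase.mp hb
    exact mem_filter.mpr ⟨hbs, (hmin b hbs).lt_of_ne fun h => hne (hg ha hbs h).symm⟩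
  calc #s = #(s.erase a) + 1 := (card_erase_add_one ha).symm
    _ ≤ #{b ∈ s | g a < g b} + 1 := Nat.add_le_add_right (card_le_card herase) 1
    _ ≤ d := h a ha

section UniversalFamily

variable {α β : Type*} [DecidableEq β]

/-- A finite family `F` of functions is universal on `V`, for `r` values, if two distinct points
of `V` collide under at most `#F / r` members of `F`. The codomain `β` is not required to have
`r` elements, and the bound is multiplied out to avoid the division. -/
def IsUniversalOn (V : Set α) (r : ℕ) (F : Finset (α → β)) : Prop :=
  V.Pairwise fun x y => #{f ∈ F | f x = f y} * r ≤ #F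

theorem two_le_card_collisions {f : α → β} {W : Finset α} (hf : ¬ Set.InjOn f W) :
    2 ≤ #{p ∈ W.offDiag | f p.1 = f p.2} := by
  simp only [Set.InjOn, not_forall] at hf
  obtain ⟨x, hx, y, hy, hfxy, hxy⟩ := hf
  refine Finset.one_lt_card.mpr ⟨(x, y), ?_, (y, x), ?_, fun h => hxy (congrArg Prod.fst h)⟩
  · exact mem_filter.mpr ⟨mem_offDiag.mpr ⟨hx, hy, hxy⟩, hfxy⟩
  · exact mem_filter.mpr ⟨mem_offDiag.mpr ⟨hy, hx, Ne.symm hxy⟩, hfxy.symm⟩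

namespace IsUniversalOn

variable {V : Set α} {r : ℕ} {F : Finset (α → β)} {W : Finset α}

theorem two_mul_card_not_injOn_mul_le (hF : IsUniversalOn V r F) (hW : ↑W ⊆ V) :
    2 * #{f ∈ F | ¬ Set.InjOn f W} * r ≤ #W.offDiag * #F := by
  have hcollide : 2 * #{f ∈ F | ¬ Set.InjOn f W} ≤
      ∑ f ∈ F, #{p ∈ W.offDiag | f p.1 = f p.2} :=
    calc 2 * #{f ∈ F | ¬ Set.InjOn f W}
        = #{f ∈ F | ¬ Set.InjOn f W} • 2 := mul_comm _ _
      _ ≤ ∑ f ∈ F with ¬ Set.InjOn f W, #{p ∈ W.offDiag | f p.1 = f p.2} :=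
          card_nsmul_le_sum _ _ _ fun f hf => two_le_card_collisions (mem_filter.mp hf).2
      _ ≤ ∑ f ∈ F, #{p ∈ W.offDiag | f p.1 = f p.2} :=
          sum_le_sum_of_subset (filter_subset _ _)
  have hswap : ∑ f ∈ F, #{p ∈ W.offDiag | f p.1 = f p.2} =
      ∑ p ∈ W.offDiag, #{f ∈ F | f p.1 = f p.2} :=
    sum_card_bipartiteAbove_eq_sum_card_bipartiteBelow fun (f : α → β) (p : α × α) => f p.1 = f p.2
  calc 2 * #{f ∈ F | ¬ Set.InjOn f W} * r
      ≤ (∑ p ∈ W.offDiag, #{f ∈ F | f p.1 = f p.2}) * r :=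
        Nat.mul_le_mul_right r (hswap ▸ hcollide)
    _ = ∑ p ∈ W.offDiag, #{f ∈ F | f p.1 = f p.2} * r := sum_mul _ _ _
    _ ≤ #W.offDiag • #F := sum_le_card_nsmul _ _ _ fun p hp => by
        obtain ⟨hx, hy, hne⟩ := mem_offDiag.mp hp
        exact hF (hW hx) (hW hy) hne

theorem card_le_two_mul_card_injOn (hF : IsUniversalOn V r F) (hr : 0 < r) (hW : ↑W ⊆ V)
    (hWr : #W.offDiag ≤ r) : #F ≤ 2 * #{f ∈ F | Set.InjOn f W} := by
  have hbad : 2 * #{f ∈ F | ¬ Set.InjOn f W} ≤ #F := by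
    refine Nat.le_of_mul_le_mul_right ?_ hr
    calc 2 * #{f ∈ F | ¬ Set.InjOn f W} * r
        ≤ #W.offDiag * #F := hF.two_mul_card_not_injOn_mul_le hW
      _ ≤ r * #F := Nat.mul_le_mul_right _ hWr
      _ = #F * r := mul_comm _ _
  have hsplit := card_filter_add_card_filter_not (s := F) fun f => Set.InjOn f W
  omega

end IsUniversalOn

end UniversalFamily

section EdgeOrder

/-- The sort key `β e = (wt e, e.1, e.2)` as an element of the lexicographic product, so that
`≺` is the strict order of a linear order. -/
def edgeKey (wt : ℕ × ℕ → ℝ) (e : ℕ × ℕ) : ℝ ×ₗ (ℕ ×ₗ ℕ) :=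
  toLex (wt e, toLex e)

variable {wt : ℕ × ℕ → ℝ} {e e' : ℕ × ℕ}

theorem edgeLT_iff_edgeKey_lt : edgeLT wt e e' ↔ edgeKey wt e < edgeKey wt e' := by
  rw [edgeLT, edgeKey, edgeKey, Prod.Lex.toLex_lt_toLex, Prod.Lex.toLex_lt_toLex]

theorem edgeKey_injective : Function.Injective (edgeKey wt) := fun _ _ h =>
  toLex.injective (congrArg Prod.snd (toLex.injective h))

theorem wt_le_of_edgeKey_le (h : edgeKey wt e ≤ edgeKey wt e') : wt e ≤ wt e' :=
  Prod.Lex.monotone_fst _ _ h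

end EdgeOrder

section NiceMatching

/-- The set of the parts of `f` containing the endpoints of the edge `e`, a part being represented
by the value of `f` on it. For `f = id` it is the set of endpoints of `e`. -/
def endParts (f : ℕ → ℕ) (e : ℕ × ℕ) : Finset ℕ := {f e.1, f e.2}

/-- A nice matching, phrased in the quotient by the parts of `f`: every edge joins two distinct
parts, and distinct edges have no part in common. -/
def IsNiceMatching (f : ℕ → ℕ) (M : Finset (ℕ × ℕ)) : Prop :=
  (∀ e ∈ M, f e.1 ≠ f e.2) ∧ (M : Set (ℕ × ℕ)).PairwiseDisjoint (endParts f)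

/-- The edges of `H` that join two distinct parts of `f`, neither of which belongs to the set `T`
of blocked parts. -/
def freeEdges (f : ℕ → ℕ) (T : Finset ℕ) (H : Finset (ℕ × ℕ)) : Finset (ℕ × ℕ) :=
  {e ∈ H | f e.1 ≠ f e.2 ∧ Disjoint (endParts f e) T}

variable {f : ℕ → ℕ} {H M : Finset (ℕ × ℕ)} {b e : ℕ × ℕ}

theorem card_biUnion_endParts_le (f : ℕ → ℕ) (M : Finset (ℕ × ℕ)) :
    #(M.biUnion (endParts f)) ≤ 2 * #M :=
  (card_biUnion_le_card_mul M _ 2 fun _ _ => card_le_two).trans_eq (mul_comm _ _)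

theorem coe_biUnion_endParts_id (M : Finset (ℕ × ℕ)) :
    (M.biUnion (endParts id) : Set ℕ) = coveredE M := by
  ext v
  simp [endParts, coveredE]

theorem IsMatchingE.isNiceMatching (hM : IsMatchingE M) (hloop : ∀ e ∈ M, e.1 ≠ e.2)
    (hf : NiceE f M) : IsNiceMatching f M := by
  have hfst : ∀ e ∈ M, e.1 ∈ coveredE M := fun e he => ⟨e, he, .inl rfl⟩
  have hsnd : ∀ e ∈ M, e.2 ∈ coveredE M := fun e he => ⟨e, he, .inr rfl⟩
  refine ⟨fun e he => hf.ne (hfst e he) (hsnd e he) (hloop e he), fun e he e' he' hne => ?_⟩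
  obtain ⟨h11, h12, h21, h22⟩ := hM e he e' he' hne
  have g11 := hf.ne (hfst e he) (hfst e' he') h11
  have g12 := hf.ne (hfst e he) (hsnd e' he') h12
  have g21 := hf.ne (hsnd e he) (hfst e' he') h21
  have g22 := hf.ne (hsnd e he) (hsnd e' he') h22
  simp [Function.onFun, endParts, g11.symm, g12.symm, g21.symm, g22.symm]

theorem IsNiceMatching.isMatchingE (hM : IsNiceMatching f M) : IsMatchingE M := by
  intro e he e' he' hne
  have hdisj : Disjoint (endParts f e) (endParts f e') := hM.2 he he' hne
  simp only [endParts, disjoint_insert_left, disjoint_singleton_left, mem_insert, mem_singleton,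
    not_or] at hdisj
  obtain ⟨⟨h11, h12⟩, h21, h22⟩ := hdisj
  exact ⟨ne_of_apply_ne f h11, ne_of_apply_ne f h12, ne_of_apply_ne f h21, ne_of_apply_ne f h22⟩

theorem IsNiceMatching.mem_freeEdges (hM : IsNiceMatching f M) (heM : e ∈ M)
    (heH : e ∈ H) : e ∈ freeEdges f ((M.erase e).biUnion (endParts f)) H := by
  refine mem_filter.mpr ⟨heH, hM.1 e heM, (disjoint_biUnion_right _ _ _).mpr fun a ha => ?_⟩
  exact hM.2 heM (mem_of_mem_erase ha) (ne_of_mem_erase ha).symm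

theorem IsNiceMatching.erase (hM : IsNiceMatching f M) (e : ℕ × ℕ) :
    IsNiceMatching f (M.erase e) :=
  ⟨fun a ha => hM.1 a (mem_of_mem_erase ha), hM.2.subset (coe_subset.mpr (erase_subset e M))⟩

theorem IsNiceMatching.insert_of_mem_freeEdges (hM : IsNiceMatching f M)
    (hb : b ∈ freeEdges f (M.biUnion (endParts f)) H) : IsNiceMatching f (insert b M) := by
  obtain ⟨-, hcross, hdisj⟩ := mem_filter.mp hb
  refine ⟨forall_mem_insert _ _ _ |>.mpr ⟨hcross, hM.1⟩, ?_⟩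
  rw [coe_insert]
  exact hM.2.insert fun a ha _ => (disjoint_biUnion_right _ _ _).mp hdisj a ha

theorem notMem_of_mem_freeEdges (hb : b ∈ freeEdges f (M.biUnion (endParts f)) H) : b ∉ M := by
  intro hbM
  have hdisj : Disjoint (endParts f b) (endParts f b) :=
    (disjoint_biUnion_right _ _ _).mp (mem_filter.mp hb).2.2 b hbM
  exact disjoint_left.mp hdisj (mem_insert_self _ _) (mem_insert_self _ _)

end NiceMatching

section RedCom

/-- The outcome of step (1) of `Red-Com`: the edges of `Compact` that are among the `8k`
`β`-heaviest ones at each of their two parts. -/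
noncomputable def locallyHeavy (wt : ℕ × ℕ → ℝ) (f : ℕ → ℕ) (k : ℕ) (H : Finset (ℕ × ℕ)) :
    Finset (ℕ × ℕ) :=
  {e ∈ CompactG wt f H | ∀ t ∈ endParts f e,
    #{e' ∈ CompactG wt f H | t ∈ endParts f e' ∧ edgeKey wt e < edgeKey wt e'} < 8 * k}

variable {wt : ℕ × ℕ → ℝ} {f : ℕ → ℕ} {k : ℕ} {H : Finset (ℕ × ℕ)} {T : Finset ℕ} {b e : ℕ × ℕ}

theorem mem_compactG : e ∈ CompactG wt f H ↔ e ∈ H ∧ f e.1 ≠ f e.2 ∧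
    ∀ e' ∈ H, endParts f e' = endParts f e → edgeKey wt e' ≤ edgeKey wt e := by
  simp only [CompactG, mem_filter, edgeLT_iff_edgeKey_lt, not_lt, endParts]

theorem mem_redComG : e ∈ RedComG wt f k H ↔ e ∈ locallyHeavy wt f k H ∧
    #{e' ∈ locallyHeavy wt f k H | edgeKey wt e < edgeKey wt e'} < k * (16 * k - 1) := by
  simp only [RedComG, locallyHeavy, mem_filter, edgeLT_iff_edgeKey_lt, endParts, mem_insert,
    mem_singleton, forall_eq_or_imp, forall_eq, eq_comm]

theorem redComG_subset : RedComG wt f k H ⊆ H := fun _ he =>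
  (mem_compactG.mp (mem_filter.mp (mem_redComG.mp he).1).1).1

theorem injOn_endParts_compactG : Set.InjOn (endParts f) (CompactG wt f H) := by
  intro a ha b hb hab
  obtain ⟨haH, -, hamax⟩ := mem_compactG.mp ha
  obtain ⟨hbH, -, hbmax⟩ := mem_compactG.mp hb
  exact edgeKey_injective ((hbmax a haH hab).antisymm (hamax b hbH hab.symm))

theorem card_filter_compactG_le {p : ℕ × ℕ → Prop} [DecidablePred p] {t : ℕ} (ht : t ∉ T)
    (hp : ∀ e ∈ CompactG wt f H, p e → t ∈ endParts f e ∧ ¬ Disjoint (endParts f e) T) :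
    #{e ∈ CompactG wt f H | p e} ≤ #T := by
  have hpair : ({e ∈ CompactG wt f H | p e}.image (endParts f)) ⊆ T.image fun s => {t, s} := by
    intro P hP
    obtain ⟨e, he, rfl⟩ := mem_image.mp hP
    obtain ⟨heC, hpe⟩ := mem_filter.mp he
    obtain ⟨hte, hmeet⟩ := hp e heC hpe
    obtain ⟨s, hse, hsT⟩ := not_disjoint_iff.mp hmeet
    refine mem_image.mpr ⟨s, hsT, eq_of_subset_of_card_le ?_ ?_⟩
    · exact insert_subset hte (singleton_subset_iff.mpr hse)
    · rw [card_pair (ne_of_mem_of_not_mem hsT ht).symm]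
      exact card_le_two
  calc #{e ∈ CompactG wt f H | p e}
      = #({e ∈ CompactG wt f H | p e}.image (endParts f)) :=
        (card_image_of_injOn (injOn_endParts_compactG.mono (filter_subset _ _))).symm
    _ ≤ #(T.image fun s => ({t, s} : Finset ℕ)) := card_le_card hpair
    _ ≤ #T := card_image_le

theorem card_locallyHeavy_incident_le (t : ℕ) :
    #{e ∈ locallyHeavy wt f k H | t ∈ endParts f e} ≤ 8 * k := by
  refine card_le_of_forall_card_filter_lt (g := edgeKey wt) edgeKey_injective.injOn fun a ha => ?_
  obtain ⟨haL, hta⟩ := mem_filter.mp ha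
  refine (card_le_card fun e he => ?_).trans_lt ((mem_filter.mp haL).2 t hta)
  obtain ⟨hinc, hlt⟩ := mem_filter.mp he
  obtain ⟨heL, hte⟩ := mem_filter.mp hinc
  exact mem_filter.mpr ⟨(mem_filter.mp heL).1, hte, hlt⟩

theorem not_disjoint_of_edgeKey_lt
    (hmax : ∀ e ∈ freeEdges f T H, edgeKey wt e ≤ edgeKey wt b)
    (he : e ∈ CompactG wt f H) (hlt : edgeKey wt b < edgeKey wt e) :
    ¬ Disjoint (endParts f e) T := fun hdisj => by
  obtain ⟨heH, hcross, -⟩ := mem_compactG.mp he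
  exact hlt.not_ge (hmax e (mem_filter.mpr ⟨heH, hcross, hdisj⟩))

theorem mem_compactG_of_max_freeEdges (hb : b ∈ freeEdges f T H)
    (hmax : ∀ e ∈ freeEdges f T H, edgeKey wt e ≤ edgeKey wt b) : b ∈ CompactG wt f H := by
  obtain ⟨hbH, hcross, hdisj⟩ := mem_filter.mp hb
  refine mem_compactG.mpr ⟨hbH, hcross, fun e heH hparts =>
    hmax e (mem_filter.mpr ⟨heH, fun hloop => ?_, hparts ▸ hdisj⟩)⟩
  have hcard : #(endParts f e) = 2 := hparts ▸ card_pair hcross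
  simp [endParts, hloop] at hcard

theorem mem_locallyHeavy_of_max_freeEdges (hT : #T < 8 * k) (hb : b ∈ freeEdges f T H)
    (hmax : ∀ e ∈ freeEdges f T H, edgeKey wt e ≤ edgeKey wt b) :
    b ∈ locallyHeavy wt f k H := by
  refine mem_filter.mpr ⟨mem_compactG_of_max_freeEdges hb hmax, fun t ht => ?_⟩
  have htT : t ∉ T := disjoint_left.mp (mem_filter.mp hb).2.2 ht
  exact (card_filter_compactG_le htT fun e heC he =>
    ⟨he.1, not_disjoint_of_edgeKey_lt hmax heC he.2⟩).trans_lt hT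

theorem card_locallyHeavy_heavier_le
    (hmax : ∀ e ∈ freeEdges f T H, edgeKey wt e ≤ edgeKey wt b) :
    #{e ∈ locallyHeavy wt f k H | edgeKey wt b < edgeKey wt e} ≤ #T * (8 * k) := by
  have hcover : {e ∈ locallyHeavy wt f k H | edgeKey wt b < edgeKey wt e} ⊆
      T.biUnion fun t => {e ∈ locallyHeavy wt f k H | t ∈ endParts f e} := fun e he => by
    obtain ⟨heL, hlt⟩ := mem_filter.mp he
    obtain ⟨t, hte, htT⟩ := not_disjoint_iff.mp
      (not_disjoint_of_edgeKey_lt hmax (mem_filter.mp heL).1 hlt)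
    exact mem_biUnion.mpr ⟨t, htT, mem_filter.mpr ⟨heL, hte⟩⟩
  exact (card_le_card hcover).trans
    (card_biUnion_le_card_mul T _ _ fun t _ => card_locallyHeavy_incident_le t)

theorem mem_redComG_of_max_freeEdges (hT : #T + 2 ≤ 2 * k) (hb : b ∈ freeEdges f T H)
    (hmax : ∀ e ∈ freeEdges f T H, edgeKey wt e ≤ edgeKey wt b) : b ∈ RedComG wt f k H := by
  refine mem_redComG.mpr ⟨mem_locallyHeavy_of_max_freeEdges (by omega) hb hmax, ?_⟩
  calc #{e ∈ locallyHeavy wt f k H | edgeKey wt b < edgeKey wt e}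
      ≤ #T * (8 * k) := card_locallyHeavy_heavier_le hmax
    _ = k * (8 * #T) := by ring
    _ < k * (16 * k - 1) := Nat.mul_lt_mul_of_pos_left (by omega) (by omega)

end RedCom

section Domination

/-- `B` can stand in for `A`: every nice `k`-matching in `A` is at most as heavy as some nice
`k`-matching in `B`. -/
def NiceDominates (wt : ℕ × ℕ → ℝ) (f : ℕ → ℕ) (k : ℕ) (A B : Finset (ℕ × ℕ)) : Prop :=
  ∀ M ⊆ A, #M = k → IsNiceMatching f M →
    ∃ M' ⊆ B, #M' = k ∧ IsNiceMatching f M' ∧ mweight wt M ≤ mweight wt M'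

variable {wt : ℕ × ℕ → ℝ} {f : ℕ → ℕ} {k : ℕ} {A B C H M : Finset (ℕ × ℕ)}

theorem NiceDominates.refl (A : Finset (ℕ × ℕ)) : NiceDominates wt f k A A :=
  fun M hMA hMk hM => ⟨M, hMA, hMk, hM, le_rfl⟩

theorem NiceDominates.trans (hAB : NiceDominates wt f k A B) (hBC : NiceDominates wt f k B C) :
    NiceDominates wt f k A C := fun M hMA hMk hM => by
  obtain ⟨M₁, hM₁B, hM₁k, hM₁, hle₁⟩ := hAB M hMA hMk hM
  obtain ⟨M₂, hM₂C, hM₂k, hM₂, hle₂⟩ := hBC M₁ hM₁B hM₁k hM₁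
  exact ⟨M₂, hM₂C, hM₂k, hM₂, hle₁.trans hle₂⟩

theorem IsNiceMatching.exists_exchange {e : ℕ × ℕ} (hM : IsNiceMatching f M) (heM : e ∈ M)
    (heH : e ∈ H) : ∃ b ∈ RedComG wt f #M H, b ∉ M.erase e ∧
      IsNiceMatching f (insert b (M.erase e)) ∧ wt e ≤ wt b := by
  set T := (M.erase e).biUnion (endParts f)
  have he : e ∈ freeEdges f T H := hM.mem_freeEdges heM heH
  obtain ⟨b, hb, hmax⟩ := exists_max_image (freeEdges f T H) (edgeKey wt) ⟨e, he⟩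
  have hT : #T + 2 ≤ 2 * #M := by
    have hle : #T ≤ 2 * #(M.erase e) := card_biUnion_endParts_le f _
    have hcard := card_erase_add_one heM
    omega
  exact ⟨b, mem_redComG_of_max_freeEdges hT hb hmax, notMem_of_mem_freeEdges hb,
    (hM.erase e).insert_of_mem_freeEdges hb, wt_le_of_edgeKey_le (hmax e he)⟩

theorem niceDominates_redComG_union (H F : Finset (ℕ × ℕ)) :
    NiceDominates wt f k (H ∪ F) (RedComG wt f k H ∪ F) := by
  intro M hMH hMk hM
  induction hlost : #(M \ (RedComG wt f k H ∪ F)) generalizing M with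
  | zero => exact ⟨M, sdiff_eq_empty_iff_subset.mp (card_eq_zero.mp hlost), hMk, hM, le_rfl⟩
  | succ c ih =>
    obtain ⟨e, he⟩ : (M \ (RedComG wt f k H ∪ F)).Nonempty := card_pos.mp (by omega)
    obtain ⟨heM, heR⟩ := mem_sdiff.mp he
    have heH : e ∈ H := (mem_union.mp (hMH heM)).resolve_right fun h => heR (mem_union_right _ h)
    obtain ⟨b, hbR, hbM, hnice, hwt⟩ := hM.exists_exchange (wt := wt) heM heH
    rw [hMk] at hbR
    have hsub : insert b (M.erase e) ⊆ H ∪ F :=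
      insert_subset (mem_union_left _ (redComG_subset hbR)) ((erase_subset e M).trans hMH)
    have hcard : #(insert b (M.erase e)) = k := by
      rw [card_insert_of_notMem hbM, card_erase_add_one heM, hMk]
    have hfewer : #(insert b (M.erase e) \ (RedComG wt f k H ∪ F)) = c := by
      rw [insert_sdiff_of_mem _ (mem_union_left _ hbR), erase_sdiff_comm, card_erase_of_mem he,
        hlost, Nat.add_sub_cancel]
    have hheavier : mweight wt M ≤ mweight wt (insert b (M.erase e)) := by
      rw [mweight, mweight, sum_insert hbM, ← add_sum_erase M wt heM]
      exact add_le_add_left hwt _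
    obtain ⟨M', hM'R, hM'k, hM', hle⟩ := ih _ hsub hcard hnice hfewer
    exact ⟨M', hM'R, hM'k, hM', hheavier.trans hle⟩

end Domination

section Stream

variable {wt : ℕ × ℕ → ℝ} {f : ℕ → ℕ} {k : ℕ} {ε : ℕ → ℕ × ℕ}

theorem Gji_one_union_Gji {a b : ℕ} (hab : a ≤ b) : Gji ε 1 a ∪ Gji ε (a + 1) b = Gji ε 1 b := by
  rw [Gji, Gji, Gji, ← image_union]
  congr 1
  ext x
  simp only [mem_union, mem_Icc]
  omega

theorem niceDominates_GfA_union (j : ℕ) (F : Finset (ℕ × ℕ)) :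
    NiceDominates wt f k (Gji ε 1 ((j - 1) * (k * (16 * k - 1))) ∪ F) (GfA wt f k ε j ∪ F) := by
  induction j generalizing F with
  | zero => simpa [GfA, Gji] using NiceDominates.refl F
  | succ j ih =>
    set q := k * (16 * k - 1)
    have hunion : Gji ε 1 ((j - 1) * q) ∪ (Gji ε ((j - 1) * q + 1) (j * q) ∪ F) =
        Gji ε 1 (j * q) ∪ F := by
      rw [← union_assoc, Gji_one_union_Gji (Nat.mul_le_mul_right q (Nat.sub_le j 1))]
    have hprev := ih (Gji ε ((j - 1) * q + 1) (j * q) ∪ F)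
    rw [hunion, ← union_assoc] at hprev
    exact hprev.trans (niceDominates_redComG_union _ F)

theorem niceDominates_streamGs (i : ℕ) :
    NiceDominates wt f k (Gji ε 1 i) (streamGs wt f k ε i) := by
  set q := k * (16 * k - 1)
  have hle : ((i - 1) / q - 1) * q ≤ i :=
    calc ((i - 1) / q - 1) * q ≤ (i - 1) / q * q := Nat.mul_le_mul_right q (Nat.sub_le _ 1)
      _ ≤ i - 1 := Nat.div_mul_le_self _ q
      _ ≤ i := Nat.sub_le i 1
  rw [← Gji_one_union_Gji hle]
  exact niceDominates_GfA_union _ _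

end Stream

theorem exists_max_isKMatchingE (wt : ℕ × ℕ → ℝ) {H : Finset (ℕ × ℕ)} {k : ℕ}
    (hex : ∃ M, IsKMatchingE H M k) :
    ∃ M, IsKMatchingE H M k ∧ ∀ M', IsKMatchingE H M' k → mweight wt M' ≤ mweight wt M :=
  Set.exists_max_image {M | IsKMatchingE H M k} (mweight wt)
    (H.powerset.finite_toSet.subset fun _ hM => mem_powerset.mpr hM.1) hex

theorem stmt12_general {k r i : ℕ} (hr : 0 < r) (hkr : 2 * k * (2 * k - 1) ≤ r)
    (wt : ℕ × ℕ → ℝ) {ε : ℕ → ℕ × ℕ} {V : Set ℕ} (hε : ∀ t ∈ Icc 1 i, ε t ∈ V.offDiag)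
    {F : Finset (ℕ → ℕ)} (hF : IsUniversalOn V r F) (hex : ∃ M, IsKMatchingE (Gji ε 1 i) M k) :
    #F ≤ 2 * #{f ∈ F | ∃ M, IsKMatchingE (streamGs wt f k ε i) M k ∧
      ∀ M', IsKMatchingE (Gji ε 1 i) M' k → mweight wt M' ≤ mweight wt M} := by
  obtain ⟨M, ⟨hMG, hMk, hM⟩, hMmax⟩ := exists_max_isKMatchingE wt hex
  have hMV : ∀ e ∈ M, e ∈ V.offDiag := fun e he => forall_mem_image.mpr hε e (hMG he)
  set W := M.biUnion (endParts id)
  have hWcov : (W : Set ℕ) = coveredE M := coe_biUnion_endParts_id M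
  have hWV : ↑W ⊆ V := by
    rw [hWcov]
    rintro v ⟨e, he, rfl | rfl⟩
    exacts [(hMV e he).1, (hMV e he).2.1]
  have hWr : #W.offDiag ≤ r :=
    (card_offDiag_le_of_card_le (hMk ▸ card_biUnion_endParts_le id M)).trans hkr
  refine (hF.card_le_two_mul_card_injOn hr hWV hWr).trans
    (Nat.mul_le_mul_left 2 (card_le_card (monotone_filter_right F fun f _ hf => ?_)))
  have hfM : NiceE f M := by rwa [NiceE, ← hWcov]
  have hnice : IsNiceMatching f M := hM.isNiceMatching (fun e he => (hMV e he).2.2) hfM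
  obtain ⟨M₁, hM₁s, hM₁k, hM₁, hle⟩ := niceDominates_streamGs (wt := wt) i M hMG hMk hnice
  exact ⟨M₁, ⟨hM₁s, hM₁k, hM₁.isMatchingE⟩, fun M' hM' => (hMmax M' hM').trans hle⟩

/- **Statement 12.** Let `G` be a simple graph on `{0,…,n-1}` with nonnegative
edge weights, `k ≥ 1`, `e_1, …, e_m` (here `ε 1, …, ε m`) an enumeration of
the edges of `G`, and `Hfam` a universal family of functions from the vertex
set to `{0,…,4k²-1}`.  For each `i ∈ {1,…,m}`, if `G_i` (the graph on the
first `i` edges) contains a `k`-matching, then for at least half of the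
functions `f ∈ Hfam`, the graph `G_i^s` contains a `k`-matching whose weight
equals the maximum weight of a `k`-matching of `G_i`. -/
theorem stmt12 (n k m : ℕ) (hk : 1 ≤ k)
    (wt : ℕ × ℕ → ℝ) (hwt : ∀ e, 0 ≤ wt e)
    (ε : ℕ → ℕ × ℕ)
    (hwf : ∀ t ∈ Finset.Icc 1 m, (ε t).1 < (ε t).2 ∧ (ε t).2 < n)
    (hinj : Set.InjOn ε ↑(Finset.Icc 1 m))
    (Hfam : Finset (ℕ → ℕ)) (hHne : Hfam.Nonempty)
    (hrange : ∀ f ∈ Hfam, ∀ v, v < n → f v < 4 * k ^ 2)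
    (huniv : ∀ x y : ℕ, x < n → y < n → x ≠ y →
      (Hfam.filter (fun h => h x = h y)).card * (4 * k ^ 2) ≤ Hfam.card)
    (i : ℕ) (hi1 : 1 ≤ i) (him : i ≤ m)
    (hex : ∃ M, IsKMatchingE (Gji ε 1 i) M k) :
    Hfam.card ≤ 2 * (Hfam.filter (fun f =>
      ∃ M, IsKMatchingE (streamGs wt f k ε i) M k ∧
        ∀ M', IsKMatchingE (Gji ε 1 i) M' k →
          mweight wt M' ≤ mweight wt M)).card := by
  refine stmt12_general (V := Set.Iio n) (r := 4 * k ^ 2) (by positivity)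
    ((Nat.mul_le_mul_left _ (Nat.sub_le _ 1)).trans_eq (by ring)) wt
    (fun t ht => ?_) (fun x hx y hy => huniv x y hx hy) hex
  obtain ⟨hlt, hn⟩ := hwf t (Icc_subset_Icc_right him ht)
  exact ⟨hlt.trans hn, hn, hlt.ne⟩
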